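/- Let Φ ∈ ℝ^{m×n} have restricted isometry constant δ_{K+1} < 1/(√K + 1), let x ∈ ℝ^n be K-sparse with support T, |T| = K, and let y = Φx + v with v ≠ 0. Suppose a run of OMP has selected only correct indices in its first k iterations (1 ≤ k < K), i.e., T^k ⊆ T with |T^k| = k. If √SNR > 2√K(1 + δ_{K+1}) / ((1 − (√K + 1)δ_{K+1}) · √MAR), then the run also selects a correct index at iteration k+1, i.e., t^{k+1} ∈ T. -/

import Mathlib

noncomputable section
open Finset

/-- `Vec n` is `ℝ^n` with the Euclidean (ℓ²) norm. -/
abbrev Vec (n : ℕ) := EuclideanSpace ℝ (Fin n)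

/-- The standard inner product `⟨u, v⟩ = ∑ i, u i * v i`. -/
def dot {n : ℕ} (u v : Vec n) : ℝ := ∑ i, u i * v i

/-- The `j`-th column of a matrix, as a Euclidean vector. -/
def col {m n : ℕ} (Φ : Matrix (Fin m) (Fin n) ℝ) (j : Fin n) : Vec m :=
  WithLp.toLp 2 fun i => Φ i j

/-- Matrix-vector multiplication `Φ x`, valued in Euclidean space. -/
def mulVec' {m n : ℕ} (Φ : Matrix (Fin m) (Fin n) ℝ) (x : Vec n) : Vec m :=
  WithLp.toLp 2 fun i => ∑ j, Φ i j * x j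

/-- The support of a vector, as a `Finset`. -/
def suppF {n : ℕ} (x : Vec n) : Finset (Fin n) :=
  Finset.univ.filter fun i => x i ≠ 0

/-- Restriction of a vector to an index set (zero outside the set). -/
def restrict {n : ℕ} (x : Vec n) (S : Finset (Fin n)) : Vec n :=
  WithLp.toLp 2 fun i => if i ∈ S then x i else 0

/-- `RIPConst Φ L δ` : δ is the restricted isometry constant of `Φ` of order `L`,
i.e. the smallest `c ≥ 0` such that `(1-c)‖u‖² ≤ ‖Φu‖² ≤ (1+c)‖u‖²` for all
`L`-sparse `u`. -/
def RIPConst {m n : ℕ} (Φ : Matrix (Fin m) (Fin n) ℝ) (L : ℕ) (δ : ℝ) : Prop :=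
  IsLeast {c : ℝ | 0 ≤ c ∧ ∀ u : Vec n, (suppF u).card ≤ L →
    (1 - c) * ‖u‖ ^ 2 ≤ ‖mulVec' Φ u‖ ^ 2 ∧ ‖mulVec' Φ u‖ ^ 2 ≤ (1 + c) * ‖u‖ ^ 2} δ

/-- Signal-to-noise ratio `‖Φx‖²/‖v‖²`. -/
def SNR {m n : ℕ} (Φ : Matrix (Fin m) (Fin n) ℝ) (x : Vec n) (v : Vec m) : ℝ :=
  ‖mulVec' Φ x‖ ^ 2 / ‖v‖ ^ 2

/-- A run of `N` iterations of Orthogonal Matching Pursuit on data `(Φ, y)`: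
`idx (k+1) = t^{k+1}` is the index selected at iteration `k+1`, `sets k = T^k`,
`est k = x^k` and `res k = r^k`. -/
structure OMPRun {m n : ℕ} (Φ : Matrix (Fin m) (Fin n) ℝ) (y : Vec m) (N : ℕ) where
  idx : ℕ → Fin n
  sets : ℕ → Finset (Fin n)
  est : ℕ → Vec n
  res : ℕ → Vec m
  sets_zero : sets 0 = ∅
  est_zero : est 0 = 0
  res_zero : res 0 = y
  idx_not_mem : ∀ k < N, idx (k + 1) ∉ sets k
  idx_max : ∀ k < N, ∀ i : Fin n, i ∉ sets k →
    |dot (col Φ i) (res k)| ≤ |dot (col Φ (idx (k + 1))) (res k)|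
  sets_succ : ∀ k < N, sets (k + 1) = insert (idx (k + 1)) (sets k)
  est_supp : ∀ k < N, suppF (est (k + 1)) ⊆ sets (k + 1)
  est_min : ∀ k < N, ∀ u : Vec n, suppF u ⊆ sets (k + 1) →
    ‖y - mulVec' Φ (est (k + 1))‖ ≤ ‖y - mulVec' Φ u‖
  res_succ : ∀ k < N, res (k + 1) = y - mulVec' Φ (est (k + 1))

/-- The vector `Φᵀ w` restricted to an index set `A` (the vector of correlations
`⟨φ_i, w⟩` for `i ∈ A`, zero outside `A`), as a Euclidean vector. -/
def colDots {m n : ℕ} (Φ : Matrix (Fin m) (Fin n) ℝ) (A : Finset (Fin n)) (w : Vec m) : Vec n :=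
  WithLp.toLp 2 fun i => if i ∈ A then dot (col Φ i) w else 0

/-- The vector `Φᵀ w` of all column correlations, as a plain function (so `‖·‖`
is the sup/ℓ∞ norm). -/
def dualVec {m n : ℕ} (Φ : Matrix (Fin m) (Fin n) ℝ) (w : Vec m) : Fin n → ℝ :=
  fun i => dot (col Φ i) w

/-- `P⊥_S w` : the projection of `w` onto the orthogonal complement of the span
of the columns of `Φ` indexed by `S`. -/
def perpProj {m n : ℕ} (Φ : Matrix (Fin m) (Fin n) ℝ) (S : Finset (Fin n)) (w : Vec m) : Vec m :=
  w - (Submodule.orthogonalProjectionOnto (Submodule.span ℝ (col Φ '' (S : Set (Fin n)))) w : Vec m)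

/-- The `j`-th largest value (1-indexed) among `{|x i| : i ∈ Γ}` (with
multiplicities); `0` if `j > |Γ|` or `j = 0`. -/
def kthLargest {n : ℕ} (x : Vec n) (Γ : Finset (Fin n)) (j : ℕ) : ℝ :=
  if 1 ≤ j ∧ j ≤ Γ.card then
    (Multiset.sort (Γ.val.map fun i => |x i|) (· ≤ ·)).getD (Γ.card - j) 0
  else 0


theorem dot_eq_inner {n : ℕ} (u v : Vec n) : dot u v = inner ℝ u v := by
  simp only [dot, PiLp.inner_apply, RCLike.inner_apply, conj_trivial]
  exact Finset.sum_congr rfl fun i _ => mul_comm _ _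

theorem mulVec'_add {m n : ℕ} (Φ : Matrix (Fin m) (Fin n) ℝ) (a b : Vec n) :
    mulVec' Φ (a + b) = mulVec' Φ a + mulVec' Φ b := by
  ext i
  simp [mulVec', mul_add, Finset.sum_add_distrib]

theorem mulVec'_sub {m n : ℕ} (Φ : Matrix (Fin m) (Fin n) ℝ) (a b : Vec n) :
    mulVec' Φ (a - b) = mulVec' Φ a - mulVec' Φ b := by
  ext i
  simp [mulVec', mul_sub, Finset.sum_sub_distrib]

theorem mulVec'_single {m n : ℕ} (Φ : Matrix (Fin m) (Fin n) ℝ) (j : Fin n) (t : ℝ) :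
    mulVec' Φ (EuclideanSpace.single j t) = t • col Φ j := by
  ext i
  simp [mulVec', col, mul_comm]

theorem inner_mulVec' {m n : ℕ} (Φ : Matrix (Fin m) (Fin n) ℝ) (z : Vec n) (r : Vec m) :
    inner ℝ (mulVec' Φ z) r = ∑ i, z i * dot (col Φ i) r := by
  rw [← dot_eq_inner]
  simp only [dot, mulVec', col, Finset.sum_mul, Finset.mul_sum]
  rw [Finset.sum_comm]
  refine Finset.sum_congr rfl fun i _ => Finset.sum_congr rfl fun j _ => ?_
  ring

theorem orth_of_min {m : ℕ} (r a : Vec m) (h : ∀ t : ℝ, ‖r‖ ≤ ‖r - t • a‖) :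
    inner ℝ a r = 0 := by
  have h1 := h (inner ℝ a r / (‖a‖ ^ 2 + 1))
  have h2 : ‖r‖ ^ 2 ≤ ‖r - (inner ℝ a r / (‖a‖ ^ 2 + 1)) • a‖ ^ 2 := by gcongr
  rw [norm_sub_sq_real, inner_smul_right, real_inner_comm a r, norm_smul, mul_pow,
    Real.norm_eq_abs, sq_abs] at h2
  set c : ℝ := inner ℝ a r
  have hA : 0 ≤ ‖a‖ ^ 2 := by positivity
  set A := ‖a‖ ^ 2
  have h3 : 0 ≤ (c / (A + 1)) ^ 2 * A - 2 * (c / (A + 1) * c) := by linarith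
  have h4 : (c / (A + 1)) ^ 2 * A - 2 * (c / (A + 1) * c) = (c / (A + 1)) ^ 2 * (-A - 2) := by
    field_simp
    ring
  rw [h4] at h3
  have h5 : (c / (A + 1)) ^ 2 = 0 := by nlinarith [sq_nonneg (c / (A + 1))]
  have h6 := pow_eq_zero_iff (two_ne_zero) |>.1 h5
  rcases div_eq_zero_iff.1 h6 with h | h
  · exact h
  · linarith

theorem suppF_subset {n : ℕ} {u : Vec n} {S : Finset (Fin n)} :
    suppF u ⊆ S ↔ ∀ i, i ∉ S → u i = 0 := by
  constructor
  · intro h i hi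
    by_contra hne
    exact hi (h (by simp [suppF, hne]))
  · intro h i hi
    by_contra hne
    simp [suppF] at hi
    exact hi (h i hne)

theorem cross_bound {m n K : ℕ} (Φ : Matrix (Fin m) (Fin n) ℝ) (δ : ℝ)
    (hR : ∀ u : Vec n, (suppF u).card ≤ K + 1 →
      (1 - δ) * ‖u‖ ^ 2 ≤ ‖mulVec' Φ u‖ ^ 2 ∧ ‖mulVec' Φ u‖ ^ 2 ≤ (1 + δ) * ‖u‖ ^ 2)
    (T : Finset (Fin n)) (hT : T.card = K) (z : Vec n) (hz : suppF z ⊆ T) (hz0 : 0 < ‖z‖)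
    (j : Fin n) (hj : j ∉ T) :
    |inner ℝ (col Φ j) (mulVec' Φ z)| ≤ δ * ‖z‖ := by
  have hzj : z j = 0 := suppF_subset.1 hz j hj
  have key : ∀ t : ℝ, ‖z + EuclideanSpace.single j t‖ ^ 2 = ‖z‖ ^ 2 + t ^ 2 ∧
      (suppF (z + EuclideanSpace.single j t)).card ≤ K + 1 := by
    intro t
    constructor
    · rw [norm_add_sq_real]
      rw [EuclideanSpace.inner_single_right]
      simp [hzj]
    · have : suppF (z + EuclideanSpace.single j t) ⊆ insert j T := by
        rw [suppF_subset]
        intro i hi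
        simp only [Finset.mem_insert, not_or] at hi
        simp [suppF_subset.1 hz i hi.2, hi.1]
      calc _ ≤ (insert j T).card := Finset.card_le_card this
        _ ≤ K + 1 := by rw [← hT]; exact Finset.card_insert_le _ _
  have ex : ∀ t : ℝ, ‖mulVec' Φ (z + EuclideanSpace.single j t)‖ ^ 2 =
      ‖mulVec' Φ z‖ ^ 2 + 2 * (t * inner ℝ (col Φ j) (mulVec' Φ z)) + t ^ 2 * ‖col Φ j‖ ^ 2 := by
    intro t
    rw [mulVec'_add, mulVec'_single, norm_add_sq_real, inner_smul_right, norm_smul, mul_pow,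
      Real.norm_eq_abs, sq_abs, real_inner_comm (col Φ j)]
  have h1 := hR _ (key ‖z‖).2
  have h2 := hR _ (key (-‖z‖)).2
  rw [ex, (key _).1] at h1 h2
  set c : ℝ := inner ℝ (col Φ j) (mulVec' Φ z)
  rw [abs_le]
  constructor
  · have : ‖z‖ * (-(δ * ‖z‖)) ≤ ‖z‖ * c := by nlinarith [h1.1, h2.2]
    exact le_of_mul_le_mul_left this hz0
  · have : ‖z‖ * c ≤ ‖z‖ * (δ * ‖z‖) := by nlinarith [h1.2, h2.1]
    exact le_of_mul_le_mul_left this hz0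

theorem norm_le_of_rip {m n L : ℕ} (Φ : Matrix (Fin m) (Fin n) ℝ) (δ : ℝ) (hδ : 0 ≤ δ)
    (hR : ∀ u : Vec n, (suppF u).card ≤ L →
      (1 - δ) * ‖u‖ ^ 2 ≤ ‖mulVec' Φ u‖ ^ 2 ∧ ‖mulVec' Φ u‖ ^ 2 ≤ (1 + δ) * ‖u‖ ^ 2)
    (u : Vec n) (hu : (suppF u).card ≤ L) : ‖mulVec' Φ u‖ ≤ √(1 + δ) * ‖u‖ := by
  apply le_of_sq_le_sq _ (by positivity)
  rw [mul_pow, Real.sq_sqrt (by linarith)]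
  exact (hR u hu).2

theorem final_alg {D μ p X P V q s Z δ : ℝ} (hD : 0 < D) (hμ : 0 < μ) (hp : 0 < p) (hX : 0 < X)
    (hV : 0 < V) (hq : 0 < q) (hs : 1 ≤ s) (hqδ : q ^ 2 = 1 + δ) (hPX : P ≤ q * X)
    (hZ : s * μ ≤ Z) (hDZ : D * Z ≤ (s + 1) * q * V)
    (h : P / V > 2 * p * (1 + δ) / (D * (μ / (X / p)))) : False := by
  have e : 2 * p * (1 + δ) / (D * (μ / (X / p))) = 2 * q ^ 2 * X / (D * μ) := by
    rw [← hqδ]; field_simp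
  rw [e, gt_iff_lt, div_lt_div_iff₀ (by positivity) hV] at h
  have h1 : P * (D * μ) ≤ q * X * (D * μ) := by gcongr
  have h2 : (q * X) * (2 * q * V) < (q * X) * (D * μ) := by linarith
  have h3 := lt_of_mul_lt_mul_left h2 (by positivity)
  have h4 : D * (s * μ) ≤ D * Z := by gcongr
  have h5 : s * (2 * q * V) < s * (D * μ) := by gcongr
  have h6 : 1 * (q * V) ≤ s * (q * V) := by gcongr
  linarith

/-- induction step: under the SNR condition, if the first `k`
iterations of OMP selected only correct indices, then so does iteration `k+1`. -/
theorem stmt14 {m n K k : ℕ} (Φ : Matrix (Fin m) (Fin n) ℝ) (δ : ℝ)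
    (x : Vec n) (v y : Vec m) (T : Finset (Fin n)) (hTne : T.Nonempty)
    (hsupp : suppF x = T) (hcard : T.card = K)
    (hRIP : RIPConst Φ (K + 1) δ) (hδ : δ < 1 / (Real.sqrt K + 1))
    (hv : v ≠ 0) (hy : y = mulVec' Φ x + v)
    (hk1 : 1 ≤ k) (hkK : k < K)
    (run : OMPRun Φ y (k + 1))
    (hsub : run.sets k ⊆ T) (hcardk : (run.sets k).card = k)
    (hSNR : Real.sqrt (SNR Φ x v) >
      2 * Real.sqrt K * (1 + δ) /
        ((1 - (Real.sqrt K + 1) * δ) *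
          Real.sqrt ((T.inf' hTne fun j => |x j| ^ 2) / (‖x‖ ^ 2 / K)))) :
    run.idx (k + 1) ∈ T := by
  obtain ⟨⟨hδ0, hR⟩, -⟩ := hRIP
  obtain ⟨kp, rfl⟩ : ∃ kp, k = kp + 1 := ⟨k - 1, by omega⟩
  by_contra hj
  set j := run.idx (kp + 1 + 1) with hjdef
  set S := run.sets (kp + 1) with hS
  set xk := run.est (kp + 1) with hxk
  have hres : run.res (kp + 1) = y - mulVec' Φ xk := run.res_succ kp (by omega)
  have hmax := run.idx_max (kp + 1) (by omega)
  have hes : suppF xk ⊆ S := run.est_supp kp (by omega)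
  have hmin := run.est_min kp (by omega)
  rw [hres] at hmax
  set r := y - mulVec' Φ xk with hr
  set z := x - xk with hz
  have hxT : ∀ i, i ∉ T → x i = 0 := suppF_subset.1 (hsupp.le)
  have hxkS : ∀ i, i ∉ S → xk i = 0 := suppF_subset.1 hes
  have hzx : ∀ i, i ∉ S → z i = x i := fun i hi => by simp [hz, hxkS i hi]
  have hzT : suppF z ⊆ T := suppF_subset.2 fun i hi => by
    rw [hzx i (fun h => hi (hsub h)), hxT i hi]
  have hrz : r = mulVec' Φ z + v := by
    rw [hr, hz, hy, mulVec'_sub]; abel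
  have horth : ∀ i ∈ S, dot (col Φ i) r = 0 := by
    intro i hi
    rw [dot_eq_inner]
    apply orth_of_min
    intro t
    have h := hmin (xk + EuclideanSpace.single i t) (suppF_subset.2 fun l hl => by
      have hli : l ≠ i := fun h => hl (h ▸ hi)
      simp [hxkS l hl, hli])
    rwa [mulVec'_add, mulVec'_single, ← sub_sub] at h
  -- basic quantities
  have hTS : (T \ S).card = K - (kp + 1) := by
    rw [Finset.card_sdiff_of_subset hsub, hcard, hcardk]
  set N : ℕ := (T \ S).card with hN
  have hN1 : 1 ≤ N := by omega
  have hNK : N ≤ K := by omega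
  set s := √(N : ℝ) with hs
  have hs1 : 1 ≤ s := Real.one_le_sqrt.2 (by exact_mod_cast hN1)
  have hss : s ^ 2 = N := Real.sq_sqrt (by positivity)
  have hsp : s ≤ √(K : ℝ) := Real.sqrt_le_sqrt (by exact_mod_cast hNK)
  set p := √(K : ℝ) with hp
  set I := T.inf' hTne fun j => |x j| ^ 2 with hI
  have hIpos : 0 < I := by
    rw [hI, Finset.lt_inf'_iff]
    intro i hi
    rw [← hsupp] at hi
    have : x i ≠ 0 := by simpa [suppF] using hi
    positivity
  have hIle : ∀ i ∈ T, I ≤ |x i| ^ 2 := fun i hi => Finset.inf'_le (fun j => |x j| ^ 2) hi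
  set μ := √I with hμ
  have hμpos : 0 < μ := Real.sqrt_pos.2 hIpos
  have hZsq : ∑ i ∈ T \ S, |z i| ^ 2 ≤ ‖z‖ ^ 2 := by
    rw [EuclideanSpace.norm_sq_eq]
    exact Finset.sum_le_univ_sum_of_nonneg (fun i => by positivity)
  have hNI : (N : ℝ) * I ≤ ∑ i ∈ T \ S, |z i| ^ 2 := by
    rw [← nsmul_eq_mul]
    apply Finset.card_nsmul_le_sum
    intro i hi
    rw [Finset.mem_sdiff] at hi
    rw [hzx i hi.2]
    exact hIle i hi.1
  have hZ : s * μ ≤ ‖z‖ := by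
    apply le_of_sq_le_sq _ (norm_nonneg _)
    rw [mul_pow, hss, hμ, Real.sq_sqrt hIpos.le]
    exact hNI.trans hZsq
  have hZpos : 0 < ‖z‖ := lt_of_lt_of_le (by positivity) hZ
  have hV : 0 < ‖v‖ := norm_pos_iff.2 hv
  have hX : 0 < ‖x‖ := by
    rw [norm_pos_iff]
    rintro rfl
    obtain ⟨i, hi⟩ := hTne
    rw [← hsupp] at hi
    simp [suppF] at hi
  have hD : 0 < 1 - (p + 1) * δ := by
    rw [lt_div_iff₀ (by positivity)] at hδ
    linarith
  set q := √(1 + δ) with hq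
  have hqpos : 0 < q := Real.sqrt_pos.2 (by linarith)
  have hqδ : q ^ 2 = 1 + δ := Real.sq_sqrt (by linarith)
  have hPX : ‖mulVec' Φ x‖ ≤ q * ‖x‖ :=
    norm_le_of_rip Φ δ hδ0 hR x (by rw [hsupp, hcard]; omega)
  have hzc : (suppF z).card ≤ K + 1 := (Finset.card_le_card hzT).trans (by omega)
  have hPZ : ‖mulVec' Φ z‖ ≤ q * ‖z‖ := norm_le_of_rip Φ δ hδ0 hR z hzc
  have hcol : ‖col Φ j‖ ≤ q := by
    have h := norm_le_of_rip Φ δ hδ0 hR (EuclideanSpace.single j (1 : ℝ)) (by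
      have : suppF (EuclideanSpace.single j (1 : ℝ)) ⊆ {j} := suppF_subset.2 fun i hi => by
        simp at hi
        simp [hi]
      exact (Finset.card_le_card this).trans (by simp))
    rw [mulVec'_single] at h
    simpa using h
  -- the maximal correlation
  set M := |dot (col Φ j) r| with hM
  have hMle : M ≤ δ * ‖z‖ + q * ‖v‖ := by
    have h1 := cross_bound Φ δ hR T hcard z hzT hZpos j hj
    have h2 : |inner ℝ (col Φ j) v| ≤ q * ‖v‖ :=
      (abs_real_inner_le_norm _ _).trans (by gcongr)
    rw [hM, dot_eq_inner, hrz, inner_add_right]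
    exact (abs_add_le _ _).trans (add_le_add h1 h2)
  have hM0 : 0 ≤ M := abs_nonneg _
  have hl1 : ∑ i ∈ T \ S, |z i| ≤ s * ‖z‖ := by
    apply le_of_sq_le_sq _ (by positivity)
    rw [mul_pow, hss]
    refine sq_sum_le_card_mul_sum_sq.trans ?_
    gcongr
  have hupper : inner ℝ (mulVec' Φ z) r ≤ s * ‖z‖ * M := by
    rw [inner_mulVec']
    have : ∑ i, z i * dot (col Φ i) r = ∑ i ∈ T \ S, z i * dot (col Φ i) r := by
      symm
      apply Finset.sum_subset (Finset.subset_univ _)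
      intro i _ hi
      by_cases hiS : i ∈ S
      · rw [horth i hiS, mul_zero]
      · have : i ∉ T := fun h => hi (Finset.mem_sdiff.2 ⟨h, hiS⟩)
        rw [suppF_subset.1 hzT i this, zero_mul]
    rw [this]
    calc _ ≤ ∑ i ∈ T \ S, |z i| * M := by
          apply Finset.sum_le_sum
          intro i hi
          refine (le_abs_self _).trans ?_
          rw [abs_mul]
          exact mul_le_mul_of_nonneg_left (hmax i (Finset.mem_sdiff.1 hi).2) (abs_nonneg _)
      _ = (∑ i ∈ T \ S, |z i|) * M := by rw [Finset.sum_mul]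
      _ ≤ _ := by gcongr
  have hlower : (1 - δ) * ‖z‖ ^ 2 - q * ‖z‖ * ‖v‖ ≤ inner ℝ (mulVec' Φ z) r := by
    rw [hrz, inner_add_right, real_inner_self_eq_norm_sq]
    have h1 := (hR z hzc).1
    have h2 : |inner ℝ (mulVec' Φ z) v| ≤ q * ‖z‖ * ‖v‖ :=
      (abs_real_inner_le_norm _ _).trans (by gcongr)
    have h3 := (abs_le.1 h2).1
    linarith
  have hDZ : (1 - (p + 1) * δ) * ‖z‖ ≤ (s + 1) * q * ‖v‖ := by
    have h1 : s * ‖z‖ * M ≤ s * ‖z‖ * (δ * ‖z‖ + q * ‖v‖) := by gcongr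
    have h2 : ‖z‖ * ((1 - (s + 1) * δ) * ‖z‖) ≤ ‖z‖ * ((s + 1) * q * ‖v‖) := by linarith
    have h3 := le_of_mul_le_mul_left h2 hZpos
    have h4 : s * (δ * ‖z‖) ≤ p * (δ * ‖z‖) := by gcongr
    linarith
  have hSNR' : √(SNR Φ x v) = ‖mulVec' Φ x‖ / ‖v‖ := by
    rw [SNR, ← div_pow, Real.sqrt_sq (by positivity)]
  have hMAR : √(I / (‖x‖ ^ 2 / K)) = μ / (‖x‖ / p) := by
    rw [Real.sqrt_div hIpos.le, Real.sqrt_div (by positivity), Real.sqrt_sq hX.le]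
  rw [hSNR', hMAR] at hSNR
  exact final_alg hD hμpos (by linarith) hX hV hqpos hs1 hqδ hPX hZ hDZ hSNR


end
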